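/- Let G be a group, r a natural number, and let S, S' : Fin r → G be two tuples whose images each generate G. Let φ_S, φ_{S'} : FreeGroup (Fin r) → G denote the group homomorphisms determined by sending the i-th free generator to S i and to S' i respectively. Then S and S' are Nielsen equivalent if and only if there exists a group automorphism ψ of FreeGroup (Fin r) such that φ_S = φ_{S'} ∘ ψ. -/

import Mathlib

/-- An elementary Nielsen move on ordered `r`-tuples of elements of a group `G`:
inversion of one entry, permutation (swap) of two entries, or a twist replacing
`g_i` by `g_i * g_j` for some `j ≠ i`, all other entries being kept fixed. -/
def NielsenMove {G : Type*} [Group G] {r : ℕ} (S S' : Fin r → G) : Prop :=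
  (∃ i, S' i = (S i)⁻¹ ∧ ∀ k, k ≠ i → S' k = S k) ∨
  (∃ i j, i ≠ j ∧ S' i = S j ∧ S' j = S i ∧ ∀ k, k ≠ i → k ≠ j → S' k = S k) ∨
  (∃ i j, j ≠ i ∧ S' i = S i * S j ∧ ∀ k, k ≠ i → S' k = S k)

/-- Two tuples are Nielsen equivalent if they lie in the same class of the equivalence
relation generated by the elementary Nielsen moves. -/
def NielsenEquiv {G : Type*} [Group G] {r : ℕ} (S S' : Fin r → G) : Prop :=
  Relation.EqvGen NielsenMove S S'

/-!
The automorphism of a Nielsen equivalence is a composite of the evident automorphisms realizing the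
moves. Conversely, applying `φ_{S'}` reduces the claim to the tuple `u` of images of the generators
under `ψ`, which has to be carried to the standard basis. Among the tuples Nielsen equivalent to `u`
take one whose entries have minimal complexity: length first, ties being broken by the shortlex
ranks of the two halves. Minimality of length means that at most half of a factor cancels against
each neighbour in a product of signed entries. If exactly half of `b` cancelled on both sides, the
two tie-breaks would make `b` and `b⁻¹` share their initial half, which is impossible for `b ≠ 1`.
So every factor of a reduced product leaves a letter behind, whence a product of `n` factors has
length at least `n`. A product equal to a generator therefore has only one factor, so up to signs
and order the tuple is the standard basis.
-/

open FreeGroup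

section CommonPrefix

variable {β : Type*} [DecidableEq β]

/-- The longest common prefix of two lists. -/
def commonPrefix : List β → List β → List β
  | a :: l, b :: m => if a = b then a :: commonPrefix l m else []
  | _, _ => []

theorem prefix_commonPrefix_iff {p l m : List β} :
    p <+: commonPrefix l m ↔ p <+: l ∧ p <+: m := by
  induction l, m using commonPrefix.induct generalizing p with
  | case1 l a m ih =>
    cases p with
    | nil => simp
    | cons c p =>
      simp only [commonPrefix, if_true, List.cons_prefix_cons, ih]
      exact and_and_left
  | case2 a l b m h =>
    cases p with
    | nil => simp
    | cons c p => simp only [commonPrefix, h, if_false, List.cons_prefix_cons]; grind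
  | case3 l m h =>
    rw [commonPrefix.eq_2 l m h]
    match l, m with
    | [], _ => simp +contextual
    | _ :: _, [] => simp +contextual
    | a :: l, b :: m => exact (h a l b m rfl rfl).elim

theorem commonPrefix_prefix_left (l m : List β) : commonPrefix l m <+: l :=
  (prefix_commonPrefix_iff.1 List.prefix_rfl).1

theorem commonPrefix_prefix_right (l m : List β) : commonPrefix l m <+: m :=
  (prefix_commonPrefix_iff.1 List.prefix_rfl).2

theorem commonPrefix_comm (l m : List β) : commonPrefix l m = commonPrefix m l := by
  have h (l m : List β) : commonPrefix l m <+: commonPrefix m l :=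
    prefix_commonPrefix_iff.2 ⟨commonPrefix_prefix_right l m, commonPrefix_prefix_left l m⟩
  exact (h l m).eq_of_length_le (h m l).length_le

theorem min_length_commonPrefix_le (l m n : List β) :
    min (commonPrefix l m).length (commonPrefix m n).length ≤ (commonPrefix l n).length := by
  have hlm := commonPrefix_prefix_right l m
  have hmn := commonPrefix_prefix_left m n
  rcases le_total (commonPrefix l m).length (commonPrefix m n).length with h | h
  · exact min_le_of_left_le (prefix_commonPrefix_iff.2 ⟨commonPrefix_prefix_left l m,
      (List.prefix_of_prefix_length_le hlm hmn h).trans (commonPrefix_prefix_right m n)⟩).length_le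
  · exact min_le_of_right_le (prefix_commonPrefix_iff.2
      ⟨(List.prefix_of_prefix_length_le hmn hlm h).trans (commonPrefix_prefix_left l m),
        commonPrefix_prefix_right m n⟩).length_le

end CommonPrefix

section Cancellation

variable {α : Type*} [DecidableEq α]

/-- The number of letters of `y` (equivalently, of `x`) that cancel in the product `x * y` of
reduced words; equivalently, the Gromov product of `x⁻¹` and `y` based at `1`. -/
def cancellation (x y : FreeGroup α) : ℕ :=
  (commonPrefix x⁻¹.toWord y.toWord).length

theorem cancellation_inv_inv (x y : FreeGroup α) : cancellation y⁻¹ x⁻¹ = cancellation x y := by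
  rw [cancellation, cancellation, inv_inv, commonPrefix_comm]

theorem cancellation_one_right (x : FreeGroup α) : cancellation x 1 = 0 := by
  simpa only [cancellation, toWord_one, List.length_nil, Nat.le_zero] using
    (commonPrefix_prefix_right x⁻¹.toWord []).length_le

theorem min_cancellation_le (x y z : FreeGroup α) :
    min (cancellation x y) (cancellation y⁻¹ z) ≤ cancellation x z := by
  simpa only [cancellation, inv_inv] using
    min_length_commonPrefix_le x⁻¹.toWord y.toWord z.toWord

theorem getLast?_invRev {β : Type*} (l : List (β × Bool)) :
    (invRev l).getLast? = l.head?.map fun a => (a.1, !a.2) := by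
  simp [invRev, List.getLast?_reverse]

theorem exists_toWord_mul_eq_append (x y : FreeGroup α) :
    ∃ s p t, x.toWord = s ++ invRev p ∧ y.toWord = p ++ t ∧ p.length = cancellation x y ∧
      (x * y).toWord = s ++ t := by
  obtain ⟨p, hp⟩ : ∃ p, p = commonPrefix x⁻¹.toWord y.toWord := ⟨_, rfl⟩
  obtain ⟨s, hs⟩ : p <+: x⁻¹.toWord := hp ▸ commonPrefix_prefix_left _ _
  obtain ⟨t, ht⟩ : p <+: y.toWord := hp ▸ commonPrefix_prefix_right _ _
  have hx : x.toWord = invRev s ++ invRev p := by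
    rw [← invRev_append, hs, toWord_inv, invRev_invRev]
  have hred : IsReduced (invRev s ++ t) := by
    refine List.IsChain.append
      ((hx ▸ isReduced_toWord : IsReduced (_ ++ _)).infix ⟨[], invRev p, rfl⟩)
      ((ht ▸ isReduced_toWord : IsReduced (p ++ t)).infix ⟨p, [], by simp⟩) ?_
    intro a ha b hb hab
    by_contra hne
    rw [getLast?_invRev, Option.mem_map] at ha
    obtain ⟨c, hc, rfl⟩ := ha
    obtain rfl : c = b := Prod.ext hab (by simpa using hne)
    obtain ⟨s, rfl⟩ := List.head?_eq_some_iff.1 hc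
    obtain ⟨t, rfl⟩ := List.head?_eq_some_iff.1 hb
    have hlonger : p ++ [c] <+: commonPrefix x⁻¹.toWord y.toWord := prefix_commonPrefix_iff.2
      ⟨⟨s, by simp [← hs]⟩, ⟨t, by simp [← ht]⟩⟩
    rw [← hp] at hlonger
    simpa using hlonger.length_le
  refine ⟨invRev s, p, t, hx, ht.symm, congrArg List.length hp, ?_⟩
  have hxy : x * y = mk (invRev s ++ t) := by
    rw [← mk_toWord (x := x), ← mk_toWord (x := y), hx, ← ht]
    simp only [← mul_mk, ← inv_mk]
    group
  rw [hxy, toWord_mk, hred.reduce_eq]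

theorem norm_mul_add_two_mul_cancellation (x y : FreeGroup α) :
    (x * y).norm + 2 * cancellation x y = x.norm + y.norm := by
  obtain ⟨s, p, t, hx, hy, hp, hxy⟩ := exists_toWord_mul_eq_append x y
  simp only [FreeGroup.norm, hx, hy, hxy, ← hp, List.length_append, invRev_length]
  lia

theorem cancellation_mul_of_add_lt {x y z : FreeGroup α}
    (h : cancellation x y + cancellation y z < y.norm) :
    cancellation x (y * z) = cancellation x y := by
  -- `y * z` agrees with `y` on a longer initial segment than the one that cancels against `x`
  have hyz := norm_mul_add_two_mul_cancellation y z
  have hz := norm_mul_add_two_mul_cancellation y⁻¹ (y * z)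
  rw [inv_mul_cancel_left, norm_inv_eq] at hz
  have hle := min_cancellation_le x y (y * z)
  have hge := min_cancellation_le x (y * z) y
  rw [← cancellation_inv_inv (y * z)⁻¹ y, inv_inv] at hge
  lia

theorem norm_lt_norm_mul_self {x : FreeGroup α} (hx : x ≠ 1) : x.norm < (x * x).norm := by
  set c := reduceCyclically.conjugator x.toWord
  set r := reduceCyclically x.toWord
  have hword : x.toWord = c ++ r ++ invRev c :=
    (reduceCyclically.conj_conjugator_reduceCyclically x.toWord).symm
  have hsq : (x * x).toWord = c ++ (r ++ r) ++ invRev c := by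
    rw [toWord_mul]
    simpa using reduceCyclically.reduce_flatten_replicate_succ (isReduced_toWord (x := x)) 1
  have hr : r ≠ [] := by
    intro hr
    apply hx
    rw [← mk_toWord (x := x), hword, hr, List.append_nil, ← mul_mk, ← inv_mk, mul_inv_cancel]
  have := List.length_pos_iff.2 hr
  simp only [FreeGroup.norm, hword, hsq, List.length_append]
  lia

theorem two_mul_cancellation_self_lt {x : FreeGroup α} (hx : x ≠ 1) :
    2 * cancellation x x < x.norm := by
  have := norm_mul_add_two_mul_cancellation x x
  have := norm_lt_norm_mul_self hx
  lia

end Cancellation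

section SignedEntry

variable {G ι : Type*} [Group G]

/-- The entry `S i` of a tuple, for the signed index `(i, true)`, or its inverse, for
`(i, false)`. Signed indices are encoded as the letters of words in `FreeGroup ι`. -/
def signedEntry (S : ι → G) (a : ι × Bool) : G :=
  cond a.2 (S a.1) (S a.1)⁻¹

theorem signedEntry_not (S : ι → G) (a : ι × Bool) :
    signedEntry S (a.1, !a.2) = (signedEntry S a)⁻¹ := by
  rcases a with ⟨i, _ | _⟩ <;> simp [signedEntry]

theorem lift_mk_eq_prod_signedEntry (S : ι → G) (L : List (ι × Bool)) :
    FreeGroup.lift S (mk L) = (L.map (signedEntry S)).prod :=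
  lift_mk

end SignedEntry

section NielsenProperty

variable {α ι : Type*} [DecidableEq α]

/-- Condition (N2) for a Nielsen reduced tuple: in a reduced product of signed entries, no factor
is used up by the cancellations with its two neighbours. Condition (N0), that no entry is trivial,
is the case of three equal factors. -/
def HasNielsenProperty (u : ι → FreeGroup α) : Prop :=
  ∀ a b c : ι × Bool, IsReduced [a, b, c] →
    cancellation (signedEntry u a) (signedEntry u b) +
      cancellation (signedEntry u b) (signedEntry u c) < (signedEntry u b).norm

namespace HasNielsenProperty

variable {u : ι → FreeGroup α}

theorem cancellation_add_cancellation_prod_lt (hu : HasNielsenProperty u) (a b : ι × Bool)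
    (L : List (ι × Bool)) (h : IsReduced (a :: b :: L)) :
    cancellation (signedEntry u a) (signedEntry u b) +
      cancellation (signedEntry u b) (L.map (signedEntry u)).prod < (signedEntry u b).norm := by
  induction L generalizing a b with
  | nil =>
    have := hu a b b (by simpa using h)
    simp only [List.map_nil, List.prod_nil, cancellation_one_right]
    lia
  | cons c L ih =>
    rw [List.map_cons, List.prod_cons,
      cancellation_mul_of_add_lt (ih b c (isReduced_cons_cons.1 h).2)]
    exact hu a b c (h.infix ⟨[], L, rfl⟩)

theorem length_add_cancellation_le (hu : HasNielsenProperty u) (a : ι × Bool)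
    (L : List (ι × Bool)) (h : IsReduced (a :: L)) :
    L.length + cancellation (signedEntry u a) (L.map (signedEntry u)).prod ≤
      (L.map (signedEntry u)).prod.norm := by
  induction L generalizing a with
  | nil => simp [cancellation_one_right]
  | cons b L ih =>
    have hlt := hu.cancellation_add_cancellation_prod_lt a b L h
    have hL := ih b (isReduced_cons_cons.1 h).2
    have hnorm := norm_mul_add_two_mul_cancellation (signedEntry u b) (L.map (signedEntry u)).prod
    rw [List.map_cons, List.prod_cons, cancellation_mul_of_add_lt hlt, List.length_cons]
    lia

theorem norm_le_norm_lift [DecidableEq ι] (hu : HasNielsenProperty u) (x : FreeGroup ι) :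
    x.norm ≤ (FreeGroup.lift u x).norm := by
  have hx : IsReduced x.toWord := isReduced_toWord
  rw [← mk_toWord (x := x), lift_mk_eq_prod_signedEntry, mk_toWord, FreeGroup.norm]
  cases hL : x.toWord with
  | nil => simp
  | cons a L =>
    have := hu.length_add_cancellation_le a (a :: L) (by simpa [hL] using hx)
    lia

theorem exists_signedEntry_eq_of (hu : HasNielsenProperty u)
    (hsurj : Function.Surjective (FreeGroup.lift u)) (i : α) :
    ∃ a, signedEntry u a = FreeGroup.of i := by
  classical
  obtain ⟨x, hx⟩ := hsurj (FreeGroup.of i)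
  have hlen : x.norm ≤ 1 := by simpa [hx] using hu.norm_le_norm_lift x
  rw [FreeGroup.norm] at hlen
  rw [← mk_toWord (x := x), lift_mk_eq_prod_signedEntry] at hx
  match x.toWord, hlen, hx with
  | [], _, hx => exact absurd hx.symm (of_ne_one i)
  | [a], _, hx => exact ⟨a, by simpa using hx⟩

end HasNielsenProperty

end NielsenProperty

section WordRank

variable {β : Type*}

instance : IsWellFounded (List β) (List.Shortlex WellOrderingRel) :=
  ⟨List.Shortlex.wf IsWellFounded.wf⟩

/-- The position of a word in the shortlex order induced by a well-ordering of the letters. -/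
noncomputable def wordRank (l : List β) : Ordinal :=
  IsWellFounded.rank (List.Shortlex WellOrderingRel) l

theorem wordRank_injective : Function.Injective (wordRank (β := β)) := by
  intro l m h
  refine Std.Trichotomous.trichotomous (r := List.Shortlex WellOrderingRel) l m ?_ ?_
  · exact fun hlm => (IsWellFounded.rank_lt_of_rel hlm).ne h
  · exact fun hml => (IsWellFounded.rank_lt_of_rel hml).ne' h

theorem shortlex_of_wordRank_lt {l m : List β} (h : wordRank l < wordRank m) :
    List.Shortlex WellOrderingRel l m := by
  by_contra hlm
  refine h.ne (congrArg wordRank ?_)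
  refine Std.Trichotomous.trichotomous (r := List.Shortlex WellOrderingRel) l m hlm ?_
  exact fun hml => (IsWellFounded.rank_lt_of_rel hml).not_gt h

theorem lex_append_of_length_eq {r : β → β → Prop} {l m : List β} (hlen : l.length = m.length)
    (h : List.Lex r l m) (n : List β) : List.Lex r (l ++ n) (m ++ n) := by
  induction h with
  | nil => simp at hlen
  | cons _ ih => exact .cons (ih (by simpa using hlen))
  | rel h => exact .rel h

theorem wordRank_append_lt {l m : List β} (hlen : l.length = m.length)
    (h : wordRank l < wordRank m) (n : List β) : wordRank (l ++ n) < wordRank (m ++ n) :=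
  IsWellFounded.rank_lt_of_rel <| .of_lex (by simpa using hlen) <|
    lex_append_of_length_eq hlen ((List.shortlex_iff_lex hlen).1 (shortlex_of_wordRank_lt h)) n

end WordRank

section Complexity

variable {α : Type*} [DecidableEq α]

/-- The first half of a reduced word, rounded down. -/
def initialHalf (x : FreeGroup α) : List (α × Bool) :=
  x.toWord.take (x.norm / 2)

theorem initialHalf_ne_initialHalf_inv {x : FreeGroup α} (hx : x ≠ 1) (heven : Even x.norm) :
    initialHalf x ≠ initialHalf x⁻¹ := by
  intro h
  have hprefix : initialHalf x <+: commonPrefix x.toWord x⁻¹.toWord :=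
    prefix_commonPrefix_iff.2 ⟨List.take_prefix _ _, h ▸ List.take_prefix _ _⟩
  have hle : x.norm / 2 ≤ cancellation x⁻¹ x⁻¹ := by
    have hlen := hprefix.length_le
    rw [initialHalf, List.length_take, ← FreeGroup.norm, min_eq_left (Nat.div_le_self _ _)] at hlen
    rwa [cancellation, inv_inv]
  have hlt := two_mul_cancellation_self_lt (inv_ne_one.2 hx)
  rw [norm_inv_eq] at hlt
  obtain ⟨k, hk⟩ := heven
  lia

/-- The quantity that Nielsen reduction decreases: first the length of a word, then the ranks of
the initial halves of the word and of its inverse. The product order on the ranks makes the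
comparison invariant under inversion. -/
noncomputable def complexity (x : FreeGroup α) : ℕ ×ₗ (Ordinal × Ordinal) :=
  toLex (x.norm, wordRank (initialHalf x), wordRank (initialHalf x⁻¹))

theorem complexity_inv_lt_inv_iff {x y : FreeGroup α} :
    complexity x⁻¹ < complexity y⁻¹ ↔ complexity x < complexity y := by
  simp only [complexity, Prod.Lex.toLex_lt_toLex, norm_inv_eq, inv_inv]
  exact or_congr_right (and_congr_right fun _ => Prod.swap_lt_swap (x := (_, _)) (y := (_, _)))

theorem two_mul_cancellation_le_of_not_complexity_lt {x y : FreeGroup α}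
    (h : ¬ complexity (x * y) < complexity x) : 2 * cancellation x y ≤ y.norm := by
  have hnorm : x.norm ≤ (x * y).norm := by
    by_contra! hlt
    exact h (Prod.Lex.toLex_lt_toLex.2 (.inl hlt))
  have := norm_mul_add_two_mul_cancellation x y
  lia

-- Write `y = p t` with `p` and `t` equally long, and `x = s p⁻¹`. Then `x y = s t` has the length
-- and the initial half of `x`, while the initial half of the inverse changes from `p…` to `t⁻¹…`.
theorem wordRank_initialHalf_le_of_not_complexity_lt {x y : FreeGroup α}
    (h : ¬ complexity (x * y) < complexity x) (hy : 2 * cancellation x y = y.norm)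
    (hyx : y.norm ≤ x.norm) : wordRank (initialHalf y) ≤ wordRank (initialHalf y⁻¹) := by
  obtain ⟨s, p, t, hxw, hyw, hp, hxyw⟩ := exists_toWord_mul_eq_append x y
  have hnx : x.norm = s.length + p.length := by simp [FreeGroup.norm, hxw]
  have hny : y.norm = p.length + t.length := by simp [FreeGroup.norm, hyw]
  have htp : t.length = p.length := by lia
  have hnorm : (x * y).norm = x.norm := by simp [FreeGroup.norm, hxw, hxyw, htp]
  have hps : p.length ≤ x.norm / 2 := by lia
  have hhalf : x.norm / 2 ≤ s.length := by lia
  set n := (invRev s).take (x.norm / 2 - p.length)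
  have hx : initialHalf x = s.take (x.norm / 2) := by
    rw [initialHalf, hxw, List.take_append_of_le_length hhalf]
  have hxy : initialHalf (x * y) = s.take (x.norm / 2) := by
    rw [initialHalf, hnorm, hxyw, List.take_append_of_le_length hhalf]
  have hxinv : initialHalf x⁻¹ = p ++ n := by
    rw [initialHalf, norm_inv_eq, toWord_inv, hxw, invRev_append, invRev_invRev, List.take_append,
      List.take_of_length_le hps]
  have hxyinv : initialHalf (x * y)⁻¹ = invRev t ++ n := by
    rw [initialHalf, norm_inv_eq, hnorm, toWord_inv, hxyw, invRev_append, List.take_append,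
      invRev_length, htp, List.take_of_length_le (by rwa [invRev_length, htp])]
  have hyhalf : initialHalf y = p := by
    rw [initialHalf, hyw, List.take_left' (by lia)]
  have hyinv : initialHalf y⁻¹ = invRev t := by
    rw [initialHalf, norm_inv_eq, toWord_inv, hyw, invRev_append,
      List.take_left' (by rw [invRev_length]; lia)]
  rw [hyhalf, hyinv]
  by_contra! hlt
  refine h (Prod.Lex.toLex_lt_toLex.2 (.inr ⟨hnorm, Prod.mk_lt_mk.2 (.inr ⟨?_, ?_⟩)⟩))
  · rw [hx, hxy]
  · rw [hxinv, hxyinv]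
    exact wordRank_append_lt (by rw [invRev_length, htp]) hlt n

theorem isReduced_pair_not {ι : Type*} {a b : ι × Bool} (hab : IsReduced [a, b]) :
    IsReduced [(b.1, !b.2), (a.1, !a.2)] := by
  simp only [isReduced_cons_cons, IsReduced.singleton, and_true] at hab ⊢
  exact fun h => congrArg (!·) (hab h.symm).symm

/-- Every entry of the tuple is nontrivial, and multiplying a signed entry by another one, of a
different index, does not decrease its complexity. -/
structure IsComplexityMinimal {ι : Type*} (u : ι → FreeGroup α) : Prop where
  signedEntry_ne_one (a : ι × Bool) : signedEntry u a ≠ 1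
  not_complexity_mul_lt {a b : ι × Bool} (hab : a.1 ≠ b.1) :
    ¬ complexity (signedEntry u a * signedEntry u b) < complexity (signedEntry u a)

namespace IsComplexityMinimal

variable {ι : Type*} {u : ι → FreeGroup α} {a b : ι × Bool}

theorem two_mul_cancellation_le_right (hu : IsComplexityMinimal u) (hab : IsReduced [a, b]) :
    2 * cancellation (signedEntry u a) (signedEntry u b) ≤ (signedEntry u b).norm := by
  by_cases h : a.1 = b.1
  · rw [Prod.ext h ((isReduced_cons_cons.1 hab).1 h)]
    exact (two_mul_cancellation_self_lt (hu.signedEntry_ne_one b)).le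
  · exact two_mul_cancellation_le_of_not_complexity_lt (hu.not_complexity_mul_lt h)

theorem two_mul_cancellation_le_left (hu : IsComplexityMinimal u) (hab : IsReduced [a, b]) :
    2 * cancellation (signedEntry u a) (signedEntry u b) ≤ (signedEntry u a).norm := by
  simpa only [signedEntry_not, cancellation_inv_inv, norm_inv_eq] using
    hu.two_mul_cancellation_le_right (isReduced_pair_not hab)

theorem wordRank_initialHalf_le (hu : IsComplexityMinimal u) (hab : IsReduced [a, b])
    (h : 2 * cancellation (signedEntry u a) (signedEntry u b) = (signedEntry u b).norm) :
    wordRank (initialHalf (signedEntry u b)) ≤ wordRank (initialHalf (signedEntry u b)⁻¹) := by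
  have hne : a.1 ≠ b.1 := by
    intro heq
    obtain rfl : a = b := Prod.ext heq ((isReduced_cons_cons.1 hab).1 heq)
    exact (two_mul_cancellation_self_lt (hu.signedEntry_ne_one a)).ne h
  exact wordRank_initialHalf_le_of_not_complexity_lt (hu.not_complexity_mul_lt hne) h
    (h ▸ hu.two_mul_cancellation_le_left hab)

theorem hasNielsenProperty (hu : IsComplexityMinimal u) : HasNielsenProperty u := by
  intro a b c habc
  have hab : IsReduced [a, b] := habc.infix ⟨[], [c], rfl⟩
  have hbc : IsReduced [b, c] := habc.infix ⟨[a], [], rfl⟩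
  have hleft := hu.two_mul_cancellation_le_right hab
  have hright := hu.two_mul_cancellation_le_left hbc
  by_contra! hsum
  have hle := hu.wordRank_initialHalf_le hab (by lia)
  have hge := hu.wordRank_initialHalf_le (isReduced_pair_not hbc) (by
    simp only [signedEntry_not, cancellation_inv_inv, norm_inv_eq]
    lia)
  rw [signedEntry_not, inv_inv] at hge
  exact initialHalf_ne_initialHalf_inv (hu.signedEntry_ne_one b)
    ⟨cancellation (signedEntry u a) (signedEntry u b), by lia⟩
    (wordRank_injective (hle.antisymm hge))

end IsComplexityMinimal

end Complexity

section NielsenEquiv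

theorem exists_lift_eq_comp_of_lift_comp_lift_eq_id {G ι : Type*} [Group G] {S S' : ι → G}
    {v w : ι → FreeGroup ι} (hvw : (FreeGroup.lift v).comp (FreeGroup.lift w) = MonoidHom.id _)
    (hwv : (FreeGroup.lift w).comp (FreeGroup.lift v) = MonoidHom.id _)
    (h : ∀ k, S' k = FreeGroup.lift S (v k)) :
    ∃ ψ : FreeGroup ι ≃* FreeGroup ι,
      FreeGroup.lift S = (FreeGroup.lift S').comp ψ.toMonoidHom := by
  have hS' : FreeGroup.lift S' = (FreeGroup.lift S).comp (FreeGroup.lift v) := by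
    ext k
    simp [h]
  refine ⟨(FreeGroup.lift w).toMulEquiv (FreeGroup.lift v) hvw hwv, ?_⟩
  change _ = (FreeGroup.lift S').comp (FreeGroup.lift w)
  rw [hS', MonoidHom.comp_assoc, hvw, MonoidHom.comp_id]

variable {G : Type*} [Group G] {r : ℕ} {S S' S'' : Fin r → G}

theorem NielsenMove.exists_lift_eq_comp (h : NielsenMove S S') :
    ∃ ψ : FreeGroup (Fin r) ≃* FreeGroup (Fin r),
      FreeGroup.lift S = (FreeGroup.lift S').comp ψ.toMonoidHom := by
  rcases h with ⟨i, hi, h⟩ | ⟨i, j, hij, hi, hj, h⟩ | ⟨i, j, hji, hi, h⟩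
  · have hinvol : (FreeGroup.lift (Function.update of i (of i)⁻¹)).comp
        (FreeGroup.lift (Function.update of i (of i)⁻¹)) = MonoidHom.id _ := by
      ext k
      obtain rfl | hk := eq_or_ne k i <;> simp [*]
    refine exists_lift_eq_comp_of_lift_comp_lift_eq_id hinvol hinvol fun k => ?_
    obtain rfl | hk := eq_or_ne k i <;> simp [*]
  · have hinvol : (FreeGroup.lift (of ∘ Equiv.swap i j)).comp
        (FreeGroup.lift (of ∘ Equiv.swap i j)) = MonoidHom.id _ := by
      ext k
      simp
    refine exists_lift_eq_comp_of_lift_comp_lift_eq_id hinvol hinvol fun k => ?_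
    rcases eq_or_ne k i with rfl | hki
    · simp [hi]
    rcases eq_or_ne k j with rfl | hkj
    · simp [hj]
    · simp [h k hki hkj, Equiv.swap_apply_of_ne_of_ne hki hkj]
  · refine exists_lift_eq_comp_of_lift_comp_lift_eq_id (v := Function.update of i (of i * of j))
      (w := Function.update of i (of i * (of j)⁻¹)) ?_ ?_ fun k => ?_
    · ext k
      obtain rfl | hk := eq_or_ne k i <;> simp [*]
    · ext k
      obtain rfl | hk := eq_or_ne k i <;> simp [*]
    · obtain rfl | hk := eq_or_ne k i <;> simp [*]

namespace NielsenEquiv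

theorem refl (S : Fin r → G) : NielsenEquiv S S :=
  Relation.EqvGen.refl S

theorem symm (h : NielsenEquiv S S') : NielsenEquiv S' S :=
  Relation.EqvGen.symm S S' h

theorem trans (h : NielsenEquiv S S') (h' : NielsenEquiv S' S'') : NielsenEquiv S S'' :=
  Relation.EqvGen.trans S S' S'' h h'

theorem map {H : Type*} [Group H] (f : G →* H) (h : NielsenEquiv S S') :
    NielsenEquiv (f ∘ S) (f ∘ S') := by
  induction h with
  | rel S S' h =>
    refine Relation.EqvGen.rel _ _ ?_
    rcases h with ⟨i, hi, h⟩ | ⟨i, j, hij, hi, hj, h⟩ | ⟨i, j, hji, hi, h⟩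
    · exact .inl ⟨i, by simp [hi], fun k hk => congrArg f (h k hk)⟩
    · exact .inr <| .inl
        ⟨i, j, hij, congrArg f hi, congrArg f hj, fun k hki hkj => congrArg f (h k hki hkj)⟩
    · exact .inr <| .inr ⟨i, j, hji, by simp [hi], fun k hk => congrArg f (h k hk)⟩
  | refl S => exact refl _
  | symm _ _ _ ih => exact ih.symm
  | trans _ _ _ _ _ ih ih' => exact ih.trans ih'

theorem exists_lift_eq_comp (h : NielsenEquiv S S') :
    ∃ ψ : FreeGroup (Fin r) ≃* FreeGroup (Fin r),
      FreeGroup.lift S = (FreeGroup.lift S').comp ψ.toMonoidHom := by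
  induction h with
  | rel S S' h => exact h.exists_lift_eq_comp
  | refl S => exact ⟨MulEquiv.refl _, rfl⟩
  | symm S S' _ ih =>
    obtain ⟨ψ, hψ⟩ := ih
    refine ⟨ψ.symm, ?_⟩
    ext i
    simp [hψ]
  | trans S S' S'' _ _ ih ih' =>
    obtain ⟨ψ, hψ⟩ := ih
    obtain ⟨χ, hχ⟩ := ih'
    exact ⟨ψ.trans χ, by rw [hψ, hχ]; rfl⟩

theorem injective_lift (h : NielsenEquiv S S') (hS : Function.Injective (FreeGroup.lift S)) :
    Function.Injective (FreeGroup.lift S') := by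
  obtain ⟨ψ, hψ⟩ := h.symm.exists_lift_eq_comp
  rw [hψ]
  exact hS.comp ψ.injective

theorem surjective_lift (h : NielsenEquiv S S') (hS : Function.Surjective (FreeGroup.lift S)) :
    Function.Surjective (FreeGroup.lift S') := by
  obtain ⟨ψ, hψ⟩ := h.symm.exists_lift_eq_comp
  rw [hψ]
  exact hS.comp ψ.surjective

theorem update_inv (S : Fin r → G) (i : Fin r) :
    NielsenEquiv S (Function.update S i (S i)⁻¹) :=
  Relation.EqvGen.rel _ _ <| .inl
    ⟨i, Function.update_self .., fun _ hk => Function.update_of_ne hk ..⟩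

theorem comp_swap (S : Fin r → G) {i j : Fin r} (hij : i ≠ j) :
    NielsenEquiv S (S ∘ Equiv.swap i j) :=
  Relation.EqvGen.rel _ _ <| .inr <| .inl ⟨i, j, hij, by simp, by simp,
    fun _ hki hkj => congrArg S (Equiv.swap_apply_of_ne_of_ne hki hkj)⟩

theorem update_mul (S : Fin r → G) {i j : Fin r} (hji : j ≠ i) :
    NielsenEquiv S (Function.update S i (S i * S j)) :=
  Relation.EqvGen.rel _ _ <| .inr <| .inr
    ⟨i, j, hji, Function.update_self .., fun _ hk => Function.update_of_ne hk ..⟩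

theorem update_signedEntry (S : Fin r → G) (a : Fin r × Bool) :
    NielsenEquiv S (Function.update S a.1 (signedEntry S a)) := by
  rcases a with ⟨i, _ | _⟩
  · exact update_inv S i
  · simpa [signedEntry] using refl S

theorem update_signedEntry_mul_signedEntry (S : Fin r → G) {a b : Fin r × Bool}
    (hab : a.1 ≠ b.1) :
    NielsenEquiv S (Function.update S a.1 (signedEntry S a * signedEntry S b)) := by
  set T := Function.update (Function.update S a.1 (signedEntry S a)) b.1 (signedEntry S b) with hT
  set T' := Function.update T a.1 (T a.1 * T b.1) with hT'
  have hST : NielsenEquiv S T := by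
    have hb : signedEntry (Function.update S a.1 (signedEntry S a)) b = signedEntry S b := by
      simp [signedEntry, hab.symm]
    rw [hT, ← hb]
    exact (update_signedEntry S a).trans (update_signedEntry _ b)
  have hb : signedEntry T' b = S b.1 := by
    have hTb : T' b.1 = signedEntry S b := by simp [hT', hT, hab.symm]
    rw [signedEntry, hTb]
    rcases b with ⟨j, _ | _⟩ <;> simp [signedEntry]
  have hrestore : Function.update T' b.1 (signedEntry T' b) =
      Function.update S a.1 (signedEntry S a * signedEntry S b) := by
    funext k
    rcases eq_or_ne k b.1 with rfl | hkb
    · simp [hb, hab.symm]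
    rcases eq_or_ne k a.1 with rfl | hka
    · simp [hT', hT, hab]
    · simp [hT', hT, hkb, hka]
  rw [← hrestore]
  exact (hST.trans (update_mul T hab.symm)).trans (update_signedEntry T' b)

theorem comp_perm (S : Fin r → G) (σ : Equiv.Perm (Fin r)) : NielsenEquiv S (S ∘ σ) := by
  induction σ using Equiv.Perm.swap_induction_on' with
  | one => exact refl S
  | mul_swap σ i j hij ih => exact ih.trans (comp_swap (S ∘ σ) hij)

theorem signedEntry_mk (S : Fin r → G) (ε : Fin r → Bool) :
    NielsenEquiv S fun i => signedEntry S (i, ε i) := by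
  have hpiecewise (t : Finset (Fin r)) :
      NielsenEquiv S (t.piecewise (fun i => signedEntry S (i, ε i)) S) := by
    induction t using Finset.induction_on with
    | empty => simpa using refl S
    | insert i t hi ih =>
      rw [Finset.piecewise_insert]
      refine ih.trans ?_
      convert update_signedEntry _ (i, ε i) using 2
      simp [signedEntry, hi]
  simpa using hpiecewise Finset.univ

theorem signedEntry_comp (S : Fin r → G) {a : Fin r → Fin r × Bool}
    (ha : Function.Injective fun i => (a i).1) : NielsenEquiv S fun i => signedEntry S (a i) :=
  let σ : Equiv.Perm (Fin r) := .ofBijective _ (Finite.injective_iff_bijective.1 ha)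
  (comp_perm S σ).trans (signedEntry_mk (S ∘ σ) fun i => (a i).2)

end NielsenEquiv

end NielsenEquiv

section Reduction

variable {α : Type*} {r : ℕ} {u : Fin r → FreeGroup α}

theorem signedEntry_ne_one_of_injective_lift {ι G : Type*} [Group G] {S : ι → G}
    (hS : Function.Injective (FreeGroup.lift S)) (a : ι × Bool) : signedEntry S a ≠ 1 := by
  have hne (i : ι) : S i ≠ 1 := by
    rw [← lift_apply_of (f := S), ← map_one (FreeGroup.lift S)]
    exact hS.ne (of_ne_one i)
  rcases a with ⟨i, _ | _⟩
  · exact inv_ne_one.2 (hne i)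
  · exact hne i

theorem exists_nielsenEquiv_isComplexityMinimal [DecidableEq α]
    (hu : Function.Injective (FreeGroup.lift u)) :
    ∃ v, NielsenEquiv u v ∧ IsComplexityMinimal v := by
  obtain ⟨v, hv⟩ := exists_minimalFor_of_wellFoundedLT (NielsenEquiv u)
    (fun v i => complexity (v i)) ⟨u, .refl u⟩
  have hmin {i : Fin r} {x : FreeGroup α} (hx : NielsenEquiv v (Function.update v i x)) :
      ¬ complexity x < complexity (v i) := by
    intro hlt
    refine hv.not_prop_of_lt ?_ (hv.1.trans hx)
    change complexity ∘ Function.update v i x < complexity ∘ v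
    rw [Function.comp_update]
    exact update_lt_self_iff.2 hlt
  refine ⟨v, hv.1, signedEntry_ne_one_of_injective_lift (hv.1.injective_lift hu), ?_⟩
  rintro ⟨i, _ | _⟩ b hab
  · rw [← complexity_inv_lt_inv_iff]
    have hmul := NielsenEquiv.update_signedEntry_mul_signedEntry v hab
    refine (inv_inv (v i)).symm ▸ hmin ?_
    simpa only [Function.update_self, Function.update_idem] using hmul.trans (.update_inv _ i)
  · exact hmin (NielsenEquiv.update_signedEntry_mul_signedEntry v hab)

theorem exists_nielsenEquiv_hasNielsenProperty [DecidableEq α]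
    (hu : Function.Injective (FreeGroup.lift u)) :
    ∃ v, NielsenEquiv u v ∧ HasNielsenProperty v := by
  obtain ⟨v, huv, hv⟩ := exists_nielsenEquiv_isComplexityMinimal hu
  exact ⟨v, huv, hv.hasNielsenProperty⟩

theorem of_ne_inv_of (i j : α) : of i ≠ (of j)⁻¹ := by
  classical
  intro h
  simpa [invRev] using congrArg toWord h

theorem injective_fst_of_signedEntry_eq_of {ι : Type*} {v : ι → FreeGroup α} {a : α → ι × Bool}
    (ha : ∀ i, signedEntry v (a i) = of i) : Function.Injective fun i => (a i).1 := by
  intro i j hij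
  obtain h | h := eq_or_ne (a i).2 (a j).2
  · apply of_injective
    rw [← ha i, ← ha j, Prod.ext hij h]
  · have hnot : a i = ((a j).1, !(a j).2) := Prod.ext hij (Bool.eq_not_of_ne h)
    refine (of_ne_inv_of i j ?_).elim
    rw [← ha i, ← ha j, hnot, signedEntry_not]

theorem nielsenEquiv_of_of_bijective_lift {u : Fin r → FreeGroup (Fin r)}
    (hu : Function.Bijective (FreeGroup.lift u)) : NielsenEquiv u of := by
  obtain ⟨v, huv, hv⟩ := exists_nielsenEquiv_hasNielsenProperty hu.injective
  choose a ha using hv.exists_signedEntry_eq_of (huv.surjective_lift hu.surjective)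
  have hvof := NielsenEquiv.signedEntry_comp v (injective_fst_of_signedEntry_eq_of ha)
  exact huv.trans (by simpa only [ha] using hvof)

end Reduction

theorem nielsenEquiv_iff_exists_automorphism_general {G : Type*} [Group G] {r : ℕ}
    (S S' : Fin r → G) :
    NielsenEquiv S S' ↔
      ∃ ψ : FreeGroup (Fin r) ≃* FreeGroup (Fin r),
        FreeGroup.lift S = (FreeGroup.lift S').comp ψ.toMonoidHom := by
  refine ⟨NielsenEquiv.exists_lift_eq_comp, fun ⟨ψ, hψ⟩ => ?_⟩
  have hlift : FreeGroup.lift (ψ ∘ of) = ψ.toMonoidHom := by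
    ext i
    simp
  have hof : NielsenEquiv (ψ ∘ of) of := by
    refine nielsenEquiv_of_of_bijective_lift ?_
    rw [hlift]
    exact ψ.bijective
  have hS : S = FreeGroup.lift S' ∘ ψ ∘ of := by
    funext i
    simpa using DFunLike.congr_fun hψ (of i)
  have hS' : S' = FreeGroup.lift S' ∘ of := by
    funext i
    simp
  simpa only [← hS, ← hS'] using hof.map (FreeGroup.lift S')

/-- Two generating `r`-tuples `S`, `S'` of a group `G` are Nielsen equivalent if and only
if there is an automorphism `ψ` of the free group on `r` generators with
`φ_S = φ_{S'} ∘ ψ`, where `φ_S` denotes the homomorphism sending the `i`-th free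
generator to `S i`. -/
theorem nielsenEquiv_iff_exists_automorphism {G : Type*} [Group G] {r : ℕ}
    (S S' : Fin r → G)
    (hS : Subgroup.closure (Set.range S) = ⊤)
    (hS' : Subgroup.closure (Set.range S') = ⊤) :
    NielsenEquiv S S' ↔
      ∃ ψ : FreeGroup (Fin r) ≃* FreeGroup (Fin r),
        FreeGroup.lift S = (FreeGroup.lift S').comp ψ.toMonoidHom :=
  nielsenEquiv_iff_exists_automorphism_general S S'
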